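/- arXiv:1502.02584 — 7 statements merged into one kernel-verified Lean document; each statement's English description precedes it below -/
import Mathlib

section
/- Let n ≥ 1, let 0 < λ ≤ Λ be real numbers, and let W₁, W₂ be Hermitian n×n complex matrices such that Wᵢ − λ·1 and Λ·1 − Wᵢ are positive semidefinite for i = 1, 2 (so in particular each Wᵢ is positive definite and has positive real determinant). Then there exists a Hermitian n×n complex matrix A such that A − Λ⁻¹·1 and λ⁻¹·1 − A are positive semidefinite and log(det W₁) − log(det W₂) = tr(A·(W₁ − W₂)), where det W₁, det W₂ are the (positive real) determinants and tr(A·(W₁ − W₂)) is a real number since A and W₁ − W₂ are Hermitian. -/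
open Matrix ComplexOrder

/-- The Jacobi formula along a complex line, at an invertible matrix. -/
theorem hasDerivAt_det_line {n : ℕ} (W D : Matrix (Fin n) (Fin n) ℂ) (z : ℂ)
    (h : IsUnit (W + z • D).det) :
    HasDerivAt (fun w : ℂ => (W + w • D).det)
      ((W + z • D).det * ((W + z • D)⁻¹ * D).trace) z := by
  set V := W + z • D with hV
  have key : ∀ w : ℂ, (W + w • D).det = V.det * (1 + (w - z) • (V⁻¹ * D)).det := by
    intro w
    rw [← det_mul, mul_add, mul_smul_comm, mul_nonsing_inv_cancel_left _ _ h, mul_one, hV,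
      sub_smul]
    congr 1
    abel
  set p := (det (1 + (Polynomial.X : Polynomial ℂ) • (V⁻¹ * D).map Polynomial.C)) with hp
  have e : (fun w : ℂ => (W + w • D).det) = fun w => V.det * p.eval (w - z) := by
    funext w
    rw [key]
    congr 1
    rw [hp]
    generalize V⁻¹ * D = M
    rw [← Polynomial.coe_evalRingHom, RingHom.map_det]
    congr 1
    ext i j
    by_cases hij : i = j <;> simp [hij] <;> ring
  rw [e]
  have hd : HasDerivAt (fun w : ℂ => p.eval (w - z)) (V⁻¹ * D).trace z := by
    have h0 := p.hasDerivAt (z - z)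
    rw [sub_self, derivative_det_one_add_X_smul] at h0
    rw [← sub_self z] at h0
    exact h0.comp_sub_const z z
  exact hd.const_mul _

theorem inv_pinch_upper {n : ℕ} {lam : ℝ} (hlam : 0 < lam) {W : Matrix (Fin n) (Fin n) ℂ}
    (hW : W.PosDef) (hl : (W - (lam : ℂ) • 1).PosSemidef) :
    (((lam⁻¹ : ℝ) : ℂ) • 1 - W⁻¹).PosSemidef := by
  have hu : IsUnit W.det := (isUnit_iff_isUnit_det _).1 hW.isUnit
  have hc : (lam : ℂ) ≠ 0 := by exact_mod_cast hlam.ne'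
  have hp : ((W - (lam : ℂ) • 1) * (W - (lam : ℂ) • 1)
      + (lam : ℂ) • (W - (lam : ℂ) • 1)).PosSemidef := by
    refine PosSemidef.add ?_ (hl.smul (by exact_mod_cast hlam.le))
    have := posSemidef_conjTranspose_mul_self (W - (lam : ℂ) • 1)
    rwa [hl.isHermitian.eq] at this
  have h2 := (hp.mul_mul_conjTranspose_same W⁻¹).smul
    (show (0 : ℂ) ≤ ((lam⁻¹ : ℝ) : ℂ) by exact_mod_cast (inv_pos.2 hlam).le)
  rw [hW.inv.isHermitian.eq] at h2
  convert h2 using 1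
  have e : (W - (lam : ℂ) • 1) * (W - (lam : ℂ) • 1) + (lam : ℂ) • (W - (lam : ℂ) • 1)
      = W * (W - (lam : ℂ) • 1) := by
    simp [sub_mul]
  rw [e, nonsing_inv_mul_cancel_left _ _ hu, sub_mul, mul_nonsing_inv _ hu]
  rw [smul_mul_assoc, one_mul, smul_sub, smul_smul, Complex.ofReal_inv, inv_mul_cancel₀ hc,
    one_smul]

theorem inv_pinch_lower {n : ℕ} {Lam : ℝ} (hLam : 0 < Lam) {W : Matrix (Fin n) (Fin n) ℂ}
    (hW : W.PosDef) (hL : ((Lam : ℂ) • 1 - W).PosSemidef) :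
    (W⁻¹ - ((Lam⁻¹ : ℝ) : ℂ) • 1).PosSemidef := by
  have hu : IsUnit W.det := (isUnit_iff_isUnit_det _).1 hW.isUnit
  have hc : (Lam : ℂ) ≠ 0 := by exact_mod_cast hLam.ne'
  have h1 := hW.inv.posSemidef.mul_mul_conjTranspose_same ((Lam : ℂ) • 1 - W)
  rw [hL.isHermitian.eq] at h1
  have h2 := (hL.add h1).smul
    (show (0 : ℂ) ≤ ((Lam⁻¹ ^ 2 : ℝ) : ℂ) by exact_mod_cast (pow_pos (inv_pos.2 hLam) 2).le)
  convert h2 using 1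
  have e : ((Lam : ℂ) • 1 - W) + ((Lam : ℂ) • 1 - W) * W⁻¹ * ((Lam : ℂ) • 1 - W)
      = ((Lam : ℂ) ^ 2) • W⁻¹ - (Lam : ℂ) • 1 := by
    simp only [sub_mul, mul_sub, mul_nonsing_inv _ hu, smul_mul_assoc, one_mul,
      nonsing_inv_mul _ hu, mul_smul_comm, mul_one]
    module
  rw [e, smul_sub, smul_smul, smul_smul]
  congr 2
  · push_cast
    field_simp
    simp
  · push_cast
    field_simp



/-- Mean-value identity for the log-determinant between two uniformly pinched
Hermitian matrices: there is a Hermitian matrix `A` pinched between `Λ⁻¹ • 1` and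
`λ⁻¹ • 1` with `log det W₁ − log det W₂ = tr (A (W₁ − W₂))`. -/
theorem logDet_mean_value (n : ℕ) (hn : 1 ≤ n) (lam Lam : ℝ)
    (hlam : 0 < lam) (hlamLam : lam ≤ Lam)
    (W₁ W₂ : Matrix (Fin n) (Fin n) ℂ)
    (hW₁ : W₁.IsHermitian) (hW₂ : W₂.IsHermitian)
    (h₁l : (W₁ - (lam : ℂ) • 1).PosSemidef) (h₁L : ((Lam : ℂ) • 1 - W₁).PosSemidef)
    (h₂l : (W₂ - (lam : ℂ) • 1).PosSemidef) (h₂L : ((Lam : ℂ) • 1 - W₂).PosSemidef) :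
    ∃ A : Matrix (Fin n) (Fin n) ℂ, A.IsHermitian ∧
      (A - ((Lam⁻¹ : ℝ) : ℂ) • 1).PosSemidef ∧
      (((lam⁻¹ : ℝ) : ℂ) • 1 - A).PosSemidef ∧
      ((Real.log W₁.det.re - Real.log W₂.det.re : ℝ) : ℂ) = (A * (W₁ - W₂)).trace := by


  set D := W₁ - W₂ with hD
  have hDH : D.IsHermitian := hW₁.sub hW₂
  have hLam : 0 < Lam := hlam.trans_le hlamLam
  -- the convex combinations stay pinched
  have hl : ∀ t : ℝ, 0 ≤ t → t ≤ 1 →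
      ((W₂ + (t : ℂ) • D) - (lam : ℂ) • 1).PosSemidef := by
    intro t h0 h1
    have a := (h₁l.smul (show (0 : ℂ) ≤ (t : ℂ) by exact_mod_cast h0)).add
      (h₂l.smul (show (0 : ℂ) ≤ ((1 - t : ℝ) : ℂ) by exact_mod_cast sub_nonneg.2 h1))
    convert a using 1
    push_cast
    rw [hD]
    module
  have hL : ∀ t : ℝ, 0 ≤ t → t ≤ 1 →
      ((Lam : ℂ) • 1 - (W₂ + (t : ℂ) • D)).PosSemidef := by
    intro t h0 h1
    have a := (h₁L.smul (show (0 : ℂ) ≤ (t : ℂ) by exact_mod_cast h0)).add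
      (h₂L.smul (show (0 : ℂ) ≤ ((1 - t : ℝ) : ℂ) by exact_mod_cast sub_nonneg.2 h1))
    convert a using 1
    push_cast
    rw [hD]
    module
  have hpd : ∀ t : ℝ, 0 ≤ t → t ≤ 1 → (W₂ + (t : ℂ) • D).PosDef := by
    intro t h0 h1
    have a := PosDef.posSemidef_add (hl t h0 h1)
      ((PosDef.one (n := Fin n) (R := ℂ)).smul (show (0 : ℂ) < (lam : ℂ) by exact_mod_cast hlam))
    rwa [sub_add_cancel] at a
  have hdet : ∀ t : ℝ, 0 ≤ t → t ≤ 1 →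
      0 < (W₂ + (t : ℂ) • D).det.re ∧ (W₂ + (t : ℂ) • D).det.im = 0 := by
    intro t h0 h1
    have := Complex.lt_def.1 (hpd t h0 h1).det_pos
    exact ⟨by simpa using this.1, by simpa using this.2.symm⟩
  have hder : ∀ t : ℝ, 0 ≤ t → t ≤ 1 →
      HasDerivAt (fun s : ℝ => Real.log (W₂ + (s : ℂ) • D).det.re)
        ((W₂ + (t : ℂ) • D)⁻¹ * D).trace.re t := by
    intro t h0 h1
    obtain ⟨hre, him⟩ := hdet t h0 h1
    have a := (hasDerivAt_det_line W₂ D (t : ℂ)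
      ((isUnit_iff_isUnit_det _).1 (hpd t h0 h1).isUnit)).real_of_complex
    have b := a.log hre.ne'
    convert b using 1
    rw [Complex.mul_re, him]
    field_simp
    ring
  obtain ⟨c, ⟨hc0, hc1⟩, hc⟩ := exists_hasDerivAt_eq_slope
    (fun s : ℝ => Real.log (W₂ + (s : ℂ) • D).det.re)
    (fun t : ℝ => ((W₂ + (t : ℂ) • D)⁻¹ * D).trace.re) zero_lt_one
    (fun t ht => (hder t ht.1 ht.2).continuousAt.continuousWithinAt)
    (fun t ht => hder t ht.1.le ht.2.le)
  have hP := hpd c hc0.le hc1.le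
  refine ⟨(W₂ + (c : ℂ) • D)⁻¹, hP.inv.isHermitian,
    inv_pinch_lower hLam hP (hL c hc0.le hc1.le),
    inv_pinch_upper hlam hP (hl c hc0.le hc1.le), ?_⟩
  have e1 : W₂ + ((1 : ℝ) : ℂ) • D = W₁ := by simp [hD]
  have e0 : W₂ + ((0 : ℝ) : ℂ) • D = W₂ := by simp
  simp only [e1, e0, sub_zero, div_one] at hc
  rw [← hc]
  apply Complex.conj_eq_iff_re.1
  change star _ = _
  rw [← trace_conjTranspose, conjTranspose_mul, hP.inv.isHermitian.eq, hDH.eq, trace_mul_comm]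
end

section
/- Let d ≥ 1 and let f : ℝᵈ × ℝ → ℝ be a nonnegative function that is bounded above by a constant B on the parabolic cylinder Q((0,0), 2). Suppose (x₀, t₀) ∈ Q((0,0), 1) and λ₀ := f(x₀, t₀) ≥ 4. Then there exists a point (x̃, t̃) ∈ Q((0,0), 3/2) such that f(x̃, t̃) ≥ λ₀ and f(y, s) ≤ 2·f(x̃, t̃) for every (y, s) ∈ Q((x̃, t̃), 1/f(x̃, t̃)). -/
/-- The parabolic cylinder `Q((x,t), r)` in `ℝᵈ × ℝ`. -/
def parabolicCylinder (d : ℕ) (p : EuclideanSpace ℝ (Fin d) × ℝ) (r : ℝ) :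
    Set (EuclideanSpace ℝ (Fin d) × ℝ) :=
  {q | ‖q.1 - p.1‖ < r ∧ p.2 - r ^ 2 < q.2 ∧ q.2 ≤ p.2}

/-- Parabolic point-picking: if a nonnegative function `f` is bounded on `Q((0,0),2)`
and takes a value `≥ 4` at some point of `Q((0,0),1)`, then there is a point of
`Q((0,0),3/2)` at which `f` is at least as large, and around which `f` is controlled
on the cylinder of radius `1/f` by twice its value there. -/
theorem parabolic_point_picking (d : ℕ) (hd : 1 ≤ d)
    (f : EuclideanSpace ℝ (Fin d) × ℝ → ℝ) (hf0 : ∀ q, 0 ≤ f q)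
    (B : ℝ) (hfB : ∀ q ∈ parabolicCylinder d (0, 0) 2, f q ≤ B)
    (p₀ : EuclideanSpace ℝ (Fin d) × ℝ) (hp₀ : p₀ ∈ parabolicCylinder d (0, 0) 1)
    (hlam0 : 4 ≤ f p₀) :
    ∃ p ∈ parabolicCylinder d (0, 0) (3 / 2), f p₀ ≤ f p ∧
      ∀ q ∈ parabolicCylinder d p (1 / f p), f q ≤ 2 * f p := by
  by_contra hcon
  push Not at hcon
  obtain ⟨a1, a2, a3⟩ := hp₀
  simp only [sub_zero, zero_sub] at a1 a2 a3
  have key : ∀ n : ℕ, ∃ p : EuclideanSpace ℝ (Fin d) × ℝ, f p₀ ≤ f p ∧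
      ‖p.1‖ + 2 * (1 / f p) < 3 / 2 ∧ -(9 / 4) + 2 * (1 / f p) ^ 2 < p.2 ∧ p.2 ≤ 0 ∧
      2 ^ n ≤ f p := by
    intro n
    induction n with
    | zero =>
      have h1 : 1 / f p₀ ≤ 1 / 4 := one_div_le_one_div_of_le (by norm_num) hlam0
      have h0 : 0 ≤ 1 / f p₀ := one_div_nonneg.mpr (hf0 _)
      refine ⟨p₀, le_rfl, by linarith, by nlinarith, a3, by norm_num; linarith⟩
    | succ n ih =>
      obtain ⟨p, b1, b2, b3, b4, b5⟩ := ih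
      have hp : 0 < f p := by linarith
      have h0 : 0 < 1 / f p := one_div_pos.mpr hp
      have hmem : p ∈ parabolicCylinder d (0, 0) (3 / 2) := by
        refine ⟨?_, ?_, ?_⟩ <;> simp only [sub_zero, zero_sub]
        · linarith
        · nlinarith
        · exact b4
      obtain ⟨q, ⟨c1, c2, c3⟩, c4⟩ := hcon p hmem b1
      have hq : 1 / f q ≤ 1 / f p / 2 := by
        have := one_div_le_one_div_of_le (by linarith : 0 < 2 * f p) c4.le
        calc 1 / f q ≤ 1 / (2 * f p) := this
          _ = 1 / f p / 2 := by field_simp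
      have hq0 : 0 ≤ 1 / f q := one_div_nonneg.mpr (hf0 _)
      have htri : ‖q.1‖ ≤ ‖q.1 - p.1‖ + ‖p.1‖ := by
        simpa using norm_add_le (q.1 - p.1) p.1
      refine ⟨q, by linarith, by linarith, by nlinarith, by linarith, ?_⟩
      rw [pow_succ]; linarith
  obtain ⟨n, hn⟩ := pow_unbounded_of_one_lt B (by norm_num : (1 : ℝ) < 2)
  obtain ⟨p, b1, b2, b3, b4, b5⟩ := key n
  have h0 : 0 ≤ 1 / f p := one_div_nonneg.mpr (hf0 _)
  have := hfB p (by
    refine ⟨?_, ?_, ?_⟩ <;> simp only [sub_zero, zero_sub]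
    · linarith
    · nlinarith
    · exact b4)
  linarith
end

section
/- Let n ≥ 1 and let G, H be positive-definite Hermitian n×n complex matrices. Then tr(H⁻¹G), tr(G⁻¹H), det G and det H are positive real numbers, and tr(H⁻¹G) ≤ (tr(G⁻¹H))^(n−1) · (det G / det H). -/
open Matrix ComplexOrder

lemma agm_aux {ι : Type*} [DecidableEq ι] (l : ι → ℝ) (hl : ∀ i, 0 < l i) (s : Finset ι)
    (hs : s.Nonempty) :
    1 ≤ (∑ i ∈ s, (l i)⁻¹) ^ s.card * ∏ i ∈ s, l i ∧
    ∑ i ∈ s, l i ≤ (∑ i ∈ s, (l i)⁻¹) ^ (s.card - 1) * ∏ i ∈ s, l i := by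
  induction hs using Finset.Nonempty.cons_induction with
  | singleton a => simp [(hl a).ne']
  | cons a s ha hs ih =>
    obtain ⟨h1, h2⟩ := ih
    obtain ⟨k, hk⟩ : ∃ k, s.card = k + 1 := ⟨s.card - 1, by have := hs.card_pos; omega⟩
    rw [Finset.sum_cons, Finset.sum_cons, Finset.prod_cons, Finset.card_cons, hk]
    rw [hk] at h1 h2
    simp only [Nat.add_sub_cancel] at h2 ⊢
    have hP : 0 < ∏ i ∈ s, l i := Finset.prod_pos fun i _ => hl i
    have hS : 0 < ∑ i ∈ s, (l i)⁻¹ := Finset.sum_pos (fun i _ => inv_pos.2 (hl i)) hs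
    generalize ∏ i ∈ s, l i = P at *
    generalize ∑ i ∈ s, (l i)⁻¹ = S at *
    generalize ∑ i ∈ s, l i = T at *
    have hx := hl a
    generalize l a = x at *
    have hxi : 0 < x⁻¹ := inv_pos.2 hx
    have hxx : x * x⁻¹ = 1 := mul_inv_cancel₀ hx.ne'
    have e1 : S ^ (k+1) ≤ (x⁻¹ + S) ^ (k+1) := by gcongr; linarith
    have e0 : S ^ k ≤ (x⁻¹ + S) ^ k := by gcongr; linarith
    constructor
    · calc 1 ≤ S ^ (k+1) * P := h1
        _ ≤ (x⁻¹ + S) ^ (k+1) * P := by gcongr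
        _ = (x⁻¹ + S) ^ (k+1) * x⁻¹ * (x * P) := by
          linear_combination (-(x⁻¹ + S) ^ (k+1) * P) * hxx
        _ ≤ (x⁻¹ + S) ^ (k+1) * (x⁻¹ + S) * (x * P) := by gcongr; linarith
        _ = _ := by ring
    · calc x + T ≤ x * (S ^ (k+1) * P) + S ^ k * P := by nlinarith
        _ = S ^ k * (x⁻¹ + S) * (x * P) := by
          linear_combination (-S ^ k * P) * hxx
        _ ≤ (x⁻¹ + S) ^ k * (x⁻¹ + S) * (x * P) := by gcongr
        _ = _ := by ring

lemma diag_aux {n : ℕ} {A : Matrix (Fin n) (Fin n) ℂ} (hA : A.PosDef) :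
    ∃ (U : Matrix (Fin n) (Fin n) ℂ) (d : Fin n → ℝ), (∀ i, 0 < d i) ∧
      U * Uᴴ = 1 ∧ A = U * diagonal (fun i => (d i : ℂ)) * Uᴴ := by
  refine ⟨hA.1.eigenvectorUnitary, hA.1.eigenvalues, hA.eigenvalues_pos, ?_, ?_⟩
  · exact Unitary.coe_mul_star_self hA.1.eigenvectorUnitary
  · have := hA.1.spectral_theorem
    rw [Unitary.conjStarAlgAut_apply] at this
    exact this

lemma simul_aux {n : ℕ} {G H : Matrix (Fin n) (Fin n) ℂ} (hG : G.PosDef) (hH : H.PosDef) :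
    ∃ (C : Matrix (Fin n) (Fin n) ℂ) (d : Fin n → ℝ), (∀ i, 0 < d i) ∧
      IsUnit C.det ∧ H = Cᴴ * C ∧ G = Cᴴ * diagonal (fun i => (d i : ℂ)) * C := by
  obtain ⟨U, d, hd, hU, hHU⟩ := diag_aux hH
  obtain ⟨B, hB⟩ : ∃ B : Matrix (Fin n) (Fin n) ℂ, H = Bᴴ * B := by
    refine ⟨diagonal (fun i => ((Real.sqrt (d i) : ℝ) : ℂ)) * Uᴴ, ?_⟩
    have : diagonal (fun i => (d i : ℂ)) = diagonal (fun i => ((Real.sqrt (d i) : ℝ) : ℂ)) *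
        diagonal (fun i => ((Real.sqrt (d i) : ℝ) : ℂ)) := by
      rw [diagonal_mul_diagonal]
      congr 1; ext i
      rw [← Complex.ofReal_mul, Real.mul_self_sqrt (hd i).le]
    have h2 : (diagonal (fun i => ((Real.sqrt (d i) : ℝ) : ℂ)))ᴴ =
        diagonal (fun i => ((Real.sqrt (d i) : ℝ) : ℂ)) := by
      rw [diagonal_conjTranspose]; congr 1; ext i; simp
    rw [conjTranspose_mul, h2, conjTranspose_conjTranspose, hHU, this]
    simp only [Matrix.mul_assoc]
  have hBu : IsUnit B.det := by
    have := hH.det_pos.ne'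
    rw [hB, det_mul] at this
    exact isUnit_iff_ne_zero.2 (right_ne_zero_of_mul this)
  have hP : ((B⁻¹)ᴴ * G * B⁻¹).PosDef := hG.conjTranspose_mul_mul_same
    (mulVec_injective_iff_isUnit.2 (by
      rw [isUnit_nonsing_inv_iff]; exact (isUnit_iff_isUnit_det B).2 hBu))
  obtain ⟨V, e, he, hV, hPV⟩ := diag_aux hP
  have hVd : IsUnit (Vᴴ).det := isUnit_det_of_left_inverse hV
  refine ⟨Vᴴ * B, e, he, ?_, ?_, ?_⟩
  · rw [det_mul]; exact hVd.mul hBu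
  · rw [conjTranspose_mul, conjTranspose_conjTranspose, Matrix.mul_assoc, ← Matrix.mul_assoc V,
      hV, Matrix.one_mul, hB]
  · have h3 : Bᴴ * (B⁻¹)ᴴ = 1 := by
      rw [← conjTranspose_mul, nonsing_inv_mul _ hBu, conjTranspose_one]
    calc G = (Bᴴ * (B⁻¹)ᴴ) * G * (B⁻¹ * B) := by
          rw [h3, nonsing_inv_mul _ hBu, Matrix.one_mul, Matrix.mul_one]
      _ = Bᴴ * ((B⁻¹)ᴴ * G * B⁻¹) * B := by simp only [Matrix.mul_assoc]
      _ = _ := by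
        rw [hPV, conjTranspose_mul, conjTranspose_conjTranspose]; simp only [Matrix.mul_assoc]

/-- For positive-definite Hermitian matrices `G`, `H`, the traces `tr(H⁻¹G)`,
`tr(G⁻¹H)` and the determinants are positive reals, and the arithmetic–geometric
mean inequality `tr(H⁻¹G) ≤ (tr(G⁻¹H))^(n−1) · det G / det H` holds. -/
theorem trace_agm_inequality (n : ℕ) (hn : 1 ≤ n)
    (G H : Matrix (Fin n) (Fin n) ℂ) (hG : G.PosDef) (hH : H.PosDef) :
    0 < (H⁻¹ * G).trace.re ∧ (H⁻¹ * G).trace.im = 0 ∧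
    0 < (G⁻¹ * H).trace.re ∧ (G⁻¹ * H).trace.im = 0 ∧
    0 < G.det.re ∧ G.det.im = 0 ∧
    0 < H.det.re ∧ H.det.im = 0 ∧
    (H⁻¹ * G).trace.re ≤ (G⁻¹ * H).trace.re ^ (n - 1) * (G.det.re / H.det.re) := by
  have hGd := Complex.pos_iff.1 hG.det_pos
  have hHd := Complex.pos_iff.1 hH.det_pos
  obtain ⟨C, d, hd, hC, hHC, hGC⟩ := simul_aux hG hH
  have hne : (Finset.univ : Finset (Fin n)).Nonempty := ⟨⟨0, hn⟩, Finset.mem_univ _⟩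
  have hC' : IsUnit (Cᴴ).det := by rw [det_conjTranspose]; exact hC.star
  have hdet : G.det = ((∏ i, d i : ℝ) : ℂ) * H.det := by
    rw [hGC, hHC, det_mul, det_mul, det_mul, det_diagonal]; push_cast; ring
  have hD : diagonal (fun i => (d i : ℂ)) * diagonal (fun i => (((d i)⁻¹ : ℝ) : ℂ)) = 1 := by
    rw [diagonal_mul_diagonal, ← diagonal_one]
    congr 1; ext i
    rw [← Complex.ofReal_mul, mul_inv_cancel₀ (hd i).ne', Complex.ofReal_one]
  have hHG : (H⁻¹ * G).trace = ((∑ i, d i : ℝ) : ℂ) := by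
    rw [hHC, hGC, Matrix.mul_inv_rev, Matrix.mul_assoc, Matrix.mul_assoc Cᴴ,
      nonsing_inv_mul_cancel_left _ _ hC', trace_mul_comm, Matrix.mul_assoc,
      mul_nonsing_inv _ hC, Matrix.mul_one, trace_diagonal]
    push_cast; rfl
  have hGH : (G⁻¹ * H).trace = ((∑ i, (d i)⁻¹ : ℝ) : ℂ) := by
    rw [hHC, hGC, Matrix.mul_inv_rev, Matrix.mul_inv_rev, inv_eq_right_inv hD, Matrix.mul_assoc,
      Matrix.mul_assoc _ (Cᴴ)⁻¹, nonsing_inv_mul_cancel_left _ _ hC', trace_mul_comm,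
      Matrix.mul_assoc, mul_nonsing_inv _ hC, Matrix.mul_one, trace_diagonal]
    push_cast; rfl
  have hq : G.det.re / H.det.re = ∏ i, d i := by
    rw [hdet, Complex.re_ofReal_mul, mul_div_cancel_right₀ _ hHd.1.ne']
  rw [hq, hHG, hGH]
  simp only [Complex.ofReal_re, Complex.ofReal_im]
  refine ⟨Finset.sum_pos (fun i _ => hd i) hne, trivial,
    Finset.sum_pos (fun i _ => inv_pos.2 (hd i)) hne, trivial, hGd.1, hGd.2.symm, hHd.1,
    hHd.2.symm, ?_⟩
  simpa using (agm_aux d hd Finset.univ hne).2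
end

section
/- Let n ≥ 1 and let a : Fin n → ℝ be a family of positive real numbers. Then (∑ j, a j) ≤ (∑ j, (a j)⁻¹)^(n−1) · (∏ i, a i). -/
theorem aux_one_le (m : ℕ) (a : Fin m → ℝ) (ha : ∀ i, 0 < a i) :
    1 ≤ (∑ j, (a j)⁻¹) ^ m * ∏ i, a i := by
  have h : ∏ _i : Fin m, (1 : ℝ) ≤ ∏ i, ((∑ j, (a j)⁻¹) * a i) := by
    apply Finset.prod_le_prod
    · intro i _
      exact zero_le_one
    · intro i _
      have h1 : (a i)⁻¹ ≤ ∑ j, (a j)⁻¹ :=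
        Finset.single_le_sum (f := fun j => (a j)⁻¹)
          (fun j _ => (inv_pos.2 (ha j)).le) (Finset.mem_univ i)
      calc (1 : ℝ) = (a i)⁻¹ * a i := (inv_mul_cancel₀ (ha i).ne').symm
        _ ≤ _ := mul_le_mul_of_nonneg_right h1 (ha i).le
  rw [Finset.prod_mul_distrib] at h
  simpa using h

theorem aux_succ (m : ℕ) (a : Fin (m + 1) → ℝ) (ha : ∀ i, 0 < a i) :
    (∑ j, a j) ≤ (∑ j, (a j)⁻¹) ^ m * ∏ i, a i := by
  induction m with
  | zero => simp
  | succ m ih =>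
    have h1 := ih (fun i => a i.succ) (fun i => ha _)
    have h2 := aux_one_le (m + 1) (fun i => a i.succ) (fun i => ha _)
    rw [Fin.sum_univ_succ, Fin.sum_univ_succ (fun j => (a j)⁻¹), Fin.prod_univ_succ]
    have hT : 0 ≤ ∑ i : Fin (m + 1), (a i.succ)⁻¹ :=
      Finset.sum_nonneg fun i _ => (inv_pos.2 (ha _)).le
    have hP : 0 < ∏ i : Fin (m + 1), a i.succ := Finset.prod_pos fun i _ => ha _
    have h0 := ha 0
    generalize (∑ i : Fin (m + 1), (a i.succ)⁻¹) = T at *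
    generalize (∏ i : Fin (m + 1), a i.succ) = P at *
    generalize (∑ i : Fin (m + 1), a i.succ) = S at *
    generalize a 0 = x at *
    have hx : 0 < x⁻¹ := inv_pos.2 h0
    have h3 : T ^ m ≤ (x⁻¹ + T) ^ m := pow_le_pow_left₀ hT (by linarith) m
    calc x + S ≤ x * (T ^ (m + 1) * P) + T ^ m * P :=
          add_le_add (le_mul_of_one_le_right h0.le h2) h1
      _ = T ^ m * (x⁻¹ + T) * (x * P) := by field_simp; ring
      _ ≤ (x⁻¹ + T) ^ m * (x⁻¹ + T) * (x * P) := by gcongr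
      _ = (x⁻¹ + T) ^ (m + 1) * (x * P) := by rw [pow_succ]

/-- Scalar (eigenvalue) form of the arithmetic–geometric mean type inequality:
for positive reals `a₁, …, aₙ`, one has `∑ aⱼ ≤ (∑ aⱼ⁻¹)^(n−1) · ∏ aᵢ`. -/
theorem sum_le_sum_inv_pow_mul_prod (n : ℕ) (hn : 1 ≤ n)
    (a : Fin n → ℝ) (ha : ∀ i, 0 < a i) :
    (∑ j, a j) ≤ (∑ j, (a j)⁻¹) ^ (n - 1) * ∏ i, a i := by
  obtain ⟨m, rfl⟩ : ∃ m, n = m + 1 := ⟨n - 1, by omega⟩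
  exact aux_succ m a ha
end

section
/- Let μ be a probability measure on a measurable space X, let v : X → ℝ be a nonnegative integrable function with mean v̄ := ∫ v dμ, and suppose there are constants δ > 0 and C₁ ≥ 0 with μ{x : v(x) ≤ C₁} ≥ δ. Then ∫ v dμ ≤ δ⁻¹·( ∫ |v − v̄| dμ + C₁ ). -/
open MeasureTheory

/-- If a nonnegative integrable function `v` has a sublevel set `{v ≤ C₁}` of
measure at least `δ > 0` with respect to a probability measure `μ`, then its mean
is controlled by its `L¹` oscillation about the mean:
`∫ v ≤ δ⁻¹ (∫ |v − v̄| + C₁)`. -/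
theorem mean_le_osc_of_sublevel {X : Type*} [MeasurableSpace X]
    (μ : Measure X) [IsProbabilityMeasure μ]
    (v : X → ℝ) (hv : Integrable v μ) (hv0 : ∀ x, 0 ≤ v x)
    (δ C₁ : ℝ) (hδ : 0 < δ) (hC₁ : 0 ≤ C₁)
    (hmeas : ENNReal.ofReal δ ≤ μ {x | v x ≤ C₁}) :
    ∫ x, v x ∂μ ≤ δ⁻¹ * ((∫ x, |v x - ∫ y, v y ∂μ| ∂μ) + C₁) := by
  set m := ∫ y, v y ∂μ with hm
  have hm0 : 0 ≤ m := integral_nonneg hv0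
  have hI : Integrable (fun x => |v x - m|) μ := (hv.sub (integrable_const m)).abs
  have hI0 : 0 ≤ ∫ x, |v x - m| ∂μ := integral_nonneg fun x => abs_nonneg _
  have hδr : δ ≤ μ.real {x | v x ≤ C₁} :=
    (ENNReal.ofReal_le_iff_le_toReal (measure_ne_top μ _)).1 hmeas
  have hδ1 : δ ≤ 1 := hδr.trans measureReal_le_one
  rw [inv_mul_eq_div, le_div_iff₀ hδ]
  rcases le_or_gt m C₁ with h | h
  · nlinarith
  · have hM := mul_meas_ge_le_integral_of_nonneg
      (Filter.Eventually.of_forall fun x => abs_nonneg (v x - m)) hI (m - C₁)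
    have hsub : μ.real {x | v x ≤ C₁} ≤ μ.real {x | m - C₁ ≤ |v x - m|} := by
      refine measureReal_mono ?_ (measure_ne_top μ _)
      intro x hx
      simp only [Set.mem_setOf_eq] at hx ⊢
      have := neg_abs_le (v x - m)
      linarith
    have h2 := mul_le_mul_of_nonneg_left (hδr.trans hsub) (sub_pos.2 h).le
    have h3 : δ * C₁ ≤ C₁ := mul_le_of_le_one_left hC₁ hδ1
    have h4 := h2.trans hM
    linarith
end

section
/- Fix real constants λ > 1, p₀ ≥ 1 and C ≥ 1. There exists a constant C₀ ≥ 1, depending only on λ, p₀ and C, with the following property: for every probability measure μ on a measurable space X and every measurable function f : X → [0,∞) such that (∫ f^(λp) dμ)^(1/(λp)) ≤ (C·p)^(1/p) · (∫ f^p dμ)^(1/p) for every real p ≥ p₀, one has essSup_μ f ≤ C₀ · (∫ f^(p₀) dμ)^(1/p₀). -/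
open MeasureTheory

lemma moser_aux_summable (lam p₀ C : ℝ) (hlam : 1 < lam) :
    Summable (fun i : ℕ => (Real.log (C * p₀) + i * Real.log lam) / (lam ^ i * p₀)) := by
  have hr : ‖lam⁻¹‖ < 1 := by
    rw [Real.norm_eq_abs, abs_of_pos (by positivity)]
    exact inv_lt_one_of_one_lt₀ hlam
  have h1 := summable_pow_mul_geometric_of_norm_lt_one 1 hr
  have h0 := summable_pow_mul_geometric_of_norm_lt_one 0 hr
  have h := (h0.mul_left (Real.log (C * p₀) / p₀)).add (h1.mul_left (Real.log lam / p₀))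
  refine h.congr fun i => ?_
  have : lam ≠ 0 := by positivity
  simp only [pow_zero, pow_one, one_mul, inv_pow, div_eq_mul_inv, mul_inv]
  ring

lemma moser_aux_essSup {X : Type} [MeasurableSpace X] (μ : Measure X) [IsProbabilityMeasure μ]
    (g : X → ENNReal) (hg : Measurable g) (q : ℕ → ℝ) (hq : ∀ n, 0 < q n)
    (hlim : Filter.Tendsto q Filter.atTop Filter.atTop) (M : ENNReal)
    (h : ∀ n, (∫⁻ x, g x ^ q n ∂μ) ^ (1 / q n) ≤ M) : essSup g μ ≤ M := by
  by_contra! hlt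
  obtain ⟨t, hMt, ht⟩ := exists_between hlt
  have hm0 : μ {x | t ≤ g x} ≠ 0 := by
    intro h0
    have hle : essSup g μ ≤ t := by
      refine essSup_le_of_ae_le t ?_
      have : ∀ᵐ x ∂μ, ¬ t ≤ g x := by
        rw [ae_iff]; simpa using h0
      filter_upwards [this] with x hx
      exact (not_le.mp hx).le
    exact absurd ht (not_lt.mpr hle)
  have hmt : μ {x | t ≤ g x} ≠ ⊤ := measure_ne_top _ _
  have key : ∀ n, t * μ {x | t ≤ g x} ^ (1 / q n) ≤ M := by
    intro n
    refine le_trans ?_ (h n)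
    have hM := mul_meas_ge_le_lintegral (μ := μ) (hg.pow_const (q n)) (t ^ q n)
    have hs : {x | t ^ q n ≤ g x ^ q n} = {x | t ≤ g x} := by
      ext x; simp [ENNReal.rpow_le_rpow_iff (hq n)]
    rw [hs] at hM
    have h2 := ENNReal.rpow_le_rpow hM (one_div_pos.mpr (hq n)).le
    rwa [ENNReal.mul_rpow_of_nonneg _ _ (one_div_pos.mpr (hq n)).le, ← ENNReal.rpow_mul,
      mul_one_div_cancel (hq n).ne', ENNReal.rpow_one] at h2
  have hl : Filter.Tendsto (fun n => 1 / q n) Filter.atTop (nhds 0) := by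
    simp only [one_div]
    exact tendsto_inv_atTop_zero.comp hlim
  have hl2 : Filter.Tendsto (fun n => μ {x | t ≤ g x} ^ (1 / q n)) Filter.atTop (nhds 1) := by
    generalize μ {x | t ≤ g x} = m at hm0 hmt
    lift m to NNReal using hmt
    have hm0' : m ≠ 0 := by simpa using hm0
    simp_rw [← ENNReal.coe_rpow_of_ne_zero hm0']
    rw [← ENNReal.coe_one, ENNReal.tendsto_coe, ← NNReal.rpow_zero m]
    exact (tendsto_const_nhds (x := m)).nnrpow hl (Or.inl hm0')
  have hl3 := ENNReal.Tendsto.const_mul hl2 (a := t) (Or.inl one_ne_zero)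
  rw [mul_one] at hl3
  exact absurd hMt (not_lt.mpr (le_of_tendsto' hl3 key))

/-- Moser iteration: a reverse Hölder inequality
`‖f‖_{λp} ≤ (Cp)^{1/p} ‖f‖_p` for all `p ≥ p₀` over a probability measure implies
`essSup f ≤ C₀ ‖f‖_{p₀}`, with `C₀` depending only on `λ`, `p₀`, `C`. -/
theorem moser_iteration (lam p₀ C : ℝ) (hlam : 1 < lam) (hp₀ : 1 ≤ p₀) (hC : 1 ≤ C) :
    ∃ C₀ : ℝ, 1 ≤ C₀ ∧
      ∀ (X : Type) (_ : MeasurableSpace X) (μ : Measure X), IsProbabilityMeasure μ →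
        ∀ f : X → ℝ, Measurable f → (∀ x, 0 ≤ f x) →
          (∀ p : ℝ, p₀ ≤ p →
            (∫⁻ x, ENNReal.ofReal (f x) ^ (lam * p) ∂μ) ^ (1 / (lam * p)) ≤
              ENNReal.ofReal (C * p) ^ (1 / p) *
                (∫⁻ x, ENNReal.ofReal (f x) ^ p ∂μ) ^ (1 / p)) →
          essSup (fun x => ENNReal.ofReal (f x)) μ ≤
            ENNReal.ofReal C₀ * (∫⁻ x, ENNReal.ofReal (f x) ^ p₀ ∂μ) ^ (1 / p₀) := by
  have hsum := moser_aux_summable lam p₀ C hlam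
  set a : ℕ → ℝ := fun i => (Real.log (C * p₀) + i * Real.log lam) / (lam ^ i * p₀) with ha
  have hCp : 1 ≤ C * p₀ := by nlinarith
  have ha0 : ∀ i, 0 ≤ a i := fun i => by
    have h1 := Real.log_nonneg hCp
    have h2 := Real.log_nonneg hlam.le
    simp only [ha]
    positivity
  refine ⟨Real.exp (∑' i, a i), Real.one_le_exp (tsum_nonneg ha0), ?_⟩
  intro X _ μ _ f hf hf0 H
  refine moser_aux_essSup μ _ hf.ennreal_ofReal (fun n => lam ^ n * p₀) (fun n => by positivity)
    ((tendsto_pow_atTop_atTop_of_one_lt hlam).atTop_mul_const (by positivity)) _ ?_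
  have ind : ∀ n : ℕ, (∫⁻ x, ENNReal.ofReal (f x) ^ (lam ^ n * p₀) ∂μ) ^ (1 / (lam ^ n * p₀)) ≤
      ENNReal.ofReal (Real.exp (∑ i ∈ Finset.range n, a i)) *
        (∫⁻ x, ENNReal.ofReal (f x) ^ p₀ ∂μ) ^ (1 / p₀) := by
    intro n
    induction n with
    | zero => simp
    | succ n ih =>
      have hle : p₀ ≤ lam ^ n * p₀ :=
        le_mul_of_one_le_left (by positivity) (one_le_pow₀ hlam.le)
      have h1 := H (lam ^ n * p₀) hle
      rw [← mul_assoc, ← pow_succ'] at h1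
      refine h1.trans ((mul_le_mul_right ih _).trans (le_of_eq ?_))
      have hpos : 0 < C * (lam ^ n * p₀) := by positivity
      have he : ENNReal.ofReal (C * (lam ^ n * p₀)) ^ (1 / (lam ^ n * p₀)) =
          ENNReal.ofReal (Real.exp (a n)) := by
        rw [ENNReal.ofReal_rpow_of_pos hpos, Real.rpow_def_of_pos hpos]
        have : C * (lam ^ n * p₀) = C * p₀ * lam ^ n := by ring
        rw [this, Real.log_mul (by positivity) (by positivity), Real.log_pow]
        simp only [ha]
        rw [mul_one_div]
      rw [he, Finset.sum_range_succ, Real.exp_add, ENNReal.ofReal_mul (by positivity), ← mul_assoc,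
        mul_comm (ENNReal.ofReal (Real.exp (a n)))]
  intro n
  refine (ind n).trans ?_
  gcongr
  exact hsum.sum_le_tsum _ (fun i _ => ha0 i)
end

section
/- Let n ≥ 1 and let G : Fin n → Fin n → ℂ, D : Fin n → Fin n → Fin n → ℂ, M : Fin n → Fin n → Fin n → ℂ, and B : Fin n → Fin n → Fin n → ℂ, where B is symmetric in its last two arguments (B a b c = B a c b for all a, b, c). Then for all i, j ∈ Fin n, the sum over p, q, l, m ∈ Fin n of G q p · G m l multiplied by [ D i m p · M j l q − D i m p · M l j q + D j m p · M l i q − D j m p · M i l q − D p m i · M j l q + D p m i · B q l j − D j q l · M p i m + D j q l · B m p i + D p m j · M i l q − D p m j · B q i l + D i q l · M p j m − D i q l · B m p j − D i q l · M j p m + D l q i · M j p m + D i q l · B m j p − D l q i · B m j p − D l q j · M i p m + D j q l · M i p m + D l q j · B m i p − D j q l · B m i p ] equals 0. -/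
/-- Relabeling `(p, q) ↔ (l, m)` in a fourfold sum. -/
theorem sum_four_swap {n : ℕ} (X : Fin n → Fin n → Fin n → Fin n → ℂ) :
    ∑ p, ∑ q, ∑ l, ∑ m, X p q l m = ∑ p, ∑ q, ∑ l, ∑ m, X l m p q := by
  have h : ∀ Y : Fin n → Fin n → Fin n → Fin n → ℂ,
      ∑ p, ∑ q, ∑ l, ∑ m, Y p q l m
        = ∑ a : Fin n × Fin n, ∑ b : Fin n × Fin n, Y a.1 a.2 b.1 b.2 := by
    intro Y
    simp only [Fintype.sum_prod_type]
  rw [h, h (fun p q l m => X l m p q), Finset.sum_comm]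

/-- The key cancellation `∂g ⋆ ∂²α = ∑_{i=1}^{20} A_i = 0` in the evolution of the
torsion potential along pluriclosed flow: the twenty first-order terms cancel in
pairs after relabeling summation indices, using only the symmetry of `B` in its
last two arguments. -/
theorem torsion_potential_cancellation (n : ℕ) (hn : 1 ≤ n)
    (G : Fin n → Fin n → ℂ) (D M B : Fin n → Fin n → Fin n → ℂ)
    (hB : ∀ a b c, B a b c = B a c b) (i j : Fin n) :
    ∑ p, ∑ q, ∑ l, ∑ m, G q p * G m l *
      (D i m p * M j l q - D i m p * M l j q + D j m p * M l i q - D j m p * M i l q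
        - D p m i * M j l q + D p m i * B q l j - D j q l * M p i m + D j q l * B m p i
        + D p m j * M i l q - D p m j * B q i l + D i q l * M p j m - D i q l * B m p j
        - D i q l * M j p m + D l q i * M j p m + D i q l * B m j p - D l q i * B m j p
        - D l q j * M i p m + D j q l * M i p m + D l q j * B m i p - D j q l * B m i p)
      = 0 := by
  have key := sum_four_swap (fun p q l m => G q p * G m l *
    (D i m p * M j l q - D i m p * M l j q + D j m p * M l i q - D j m p * M i l q
      - D p m i * M j l q + D p m i * B q l j + D p m j * M i l q - D p m j * B q i l))
  rw [← sub_eq_zero] at key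
  simp only [← Finset.sum_sub_distrib] at key
  rw [← key]
  refine Finset.sum_congr rfl fun p _ => Finset.sum_congr rfl fun q _ =>
    Finset.sum_congr rfl fun l _ => Finset.sum_congr rfl fun m _ => ?_
  rw [hB m p i, hB m p j]
  ring
end
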